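/- arXiv:1609.08303 — 4 statements merged into one kernel-verified Lean document; each statement's English description precedes it below -/
import Mathlib

section
/- Let p, q > 1 be coprime integers with q > p, let q/p = [a_0, a_1, …, a_n] be its regular continued fraction expansion with a_n ≥ 2, and let δ = (p−1)(q−1)/2. Then the maximal integer w ≥ 1 such that the w consecutive integers δ, δ+1, …, δ+w−1 either all belong to S(p,q) or all fail to belong to S(p,q) equals ⌊(a_n − 1)/2⌋ + 1. -/
/-- The numerical semigroup generated by `p` and `q`:
all integers of the form `t*p + u*q` with `t, u ≥ 0`. -/
def Spq (p q : ℤ) : Set ℤ := {n : ℤ | ∃ t u : ℤ, 0 ≤ t ∧ 0 ≤ u ∧ n = t * p + u * q}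

/-- The set of integers `s ≥ 0` such that `δ, δ+1, …, δ+s` either all belong to `S(p,q)`
or none of them does, where `δ = (p-1)*(q-1)/2`.  `K(p,q)` is the greatest element
of this set. -/
def KSet (p q : ℤ) : Set ℤ :=
  {s : ℤ | 0 ≤ s ∧ ∀ ρ : ℤ, 0 ≤ ρ → ρ ≤ s →
    ((p - 1) * (q - 1) / 2 + ρ ∈ Spq p q ↔ (p - 1) * (q - 1) / 2 ∈ Spq p q)}

/-- The value of the regular continued fraction `[a 0; a 1, …, a n]`. -/
def cfVal (a : ℕ → ℤ) : ℕ → ℚ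
  | 0 => (a 0 : ℚ)
  | n + 1 => (a 0 : ℚ) + 1 / cfVal (fun i => a (i + 1)) n

/-!
Put `m = 2 * ρ + 1`. As `2 * δ = (p - 1) * (q - 1)`, we have
`2 * (δ + ρ) = (A - 1) * p + (B - 1) * q` whenever `A * p + B * q = p * q + m`. A pair `(A, B)` of
this kind with `0 < A ≤ q` and `0 < B ≤ p` is the only solution in positive integers, so `δ + ρ`
lies in `S(p, q)` exactly when `A` and `B` are both odd.

Let `q' / p'` be the penultimate convergent of `q / p`; up to exchanging `p` and `q`, we have
`q * p' - p * q' = 1`. The inequalities `a_n * p' ≤ p` and `q ≤ (a_n + 1) * q'` show that the pair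
is `(q - m * q', m * p')` as long as `m ≤ a_n`, and `(2 * q - m * q', m * p' - p)` for the first
odd `m > a_n`. For odd `m` the parities of either pair do not depend on `m`. As
`A * p + B * q + p * q` is odd, exactly one of the pairs `(A, B)` and `(A + q, B - p)` consists of
odd numbers, so the membership of `δ + ρ` changes for the first time when `2 * ρ + 1` exceeds `a_n`.
-/

/-- The lengths `w ≥ 1` of the initial segments `0, 1, …, w - 1` on which `P` has constant truth
value. -/
def constantRunLengths (P : ℤ → Prop) : Set ℤ :=
  {w | 1 ≤ w ∧ ((∀ ρ, 0 ≤ ρ → ρ < w → P ρ) ∨ (∀ ρ, 0 ≤ ρ → ρ < w → ¬ P ρ))}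

lemma isGreatest_constantRunLengths {P : ℤ → Prop} {c : Prop} {w : ℤ} (hw : 1 ≤ w)
    (hlt : ∀ ρ, 0 ≤ ρ → ρ < w → (P ρ ↔ c)) (heq : P w ↔ ¬ c) :
    IsGreatest (constantRunLengths P) w := by
  have hzero : P 0 ↔ c := hlt 0 le_rfl (by lia)
  refine ⟨⟨hw, ?_⟩, ?_⟩
  · by_cases hc : c
    · exact Or.inl fun ρ h0 hρ ↦ (hlt ρ h0 hρ).2 hc
    · exact Or.inr fun ρ h0 hρ ↦ mt (hlt ρ h0 hρ).1 hc
  · rintro v ⟨_, hall | hnone⟩ <;> by_contra! hwv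
    · exact heq.1 (hall w (by lia) hwv) (hzero.1 (hall 0 le_rfl (by lia)))
    · exact hnone w (by lia) hwv (heq.2 (mt hzero.2 (hnone 0 le_rfl (by lia))))

section Semigroup

variable {p q : ℤ}

lemma Spq_comm (p q : ℤ) : Spq p q = Spq q p := by
  ext x
  constructor <;> rintro ⟨t, u, ht, hu, rfl⟩ <;> exact ⟨u, t, hu, ht, add_comm _ _⟩

lemma eq_and_eq_of_mul_add_mul_eq (hpq : IsCoprime p q) (hp : 0 < p) (hq : 0 < q)
    {s r t u : ℤ} (ht : 0 ≤ t) (hu : 0 ≤ u) (hs : s < q) (hr : r < p)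
    (h : t * p + u * q = s * p + r * q) : t = s ∧ u = r := by
  obtain ⟨c, hc⟩ : q ∣ t - s :=
    hpq.symm.dvd_of_dvd_mul_right ⟨r - u, by linear_combination h⟩
  have hur : u - r = -p * c :=
    mul_left_cancel₀ hq.ne' (by linear_combination h - p * hc)
  have hc_gt : -1 < c := lt_of_mul_lt_mul_left (by linarith) hq.le
  have hc_lt : c < 1 := lt_of_mul_lt_mul_left (by linarith) hp.le
  obtain rfl : c = 0 := by lia
  constructor <;> linarith

lemma mem_Spq_iff_even_and_even (hpq : IsCoprime p q) {s r x : ℤ} (hs₀ : 0 ≤ s) (hs : s < q)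
    (hr₀ : 0 ≤ r) (hr : r < p) (hx : 2 * x = s * p + r * q) :
    x ∈ Spq p q ↔ Even s ∧ Even r := by
  constructor
  · rintro ⟨t, u, ht, hu, rfl⟩
    obtain ⟨hts, hur⟩ := eq_and_eq_of_mul_add_mul_eq hpq (by lia) (by lia)
      (t := 2 * t) (u := 2 * u) (by lia) (by lia) hs hr (by linarith)
    exact ⟨⟨t, by lia⟩, ⟨u, by lia⟩⟩
  · rintro ⟨⟨t, rfl⟩, ⟨u, rfl⟩⟩
    exact ⟨t, u, by lia, by lia, by linarith⟩

lemma even_sub_one_mul_sub_one_of_isCoprime (hpq : IsCoprime p q) :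
    Even ((p - 1) * (q - 1)) := by
  rw [Int.even_mul, Int.even_sub_one, Int.even_sub_one]
  by_contra! ⟨hp, hq⟩
  exact absurd (hpq.isUnit_of_dvd' hp.two_dvd hq.two_dvd) (by decide)

lemma odd_add_and_odd_sub_iff_not {A B : ℤ} (h : Odd (A * p + B * q + p * q)) :
    Odd (A + q) ∧ Odd (B - p) ↔ ¬ (Odd A ∧ Odd B) := by
  have hmod : (A + q) * (B - p) = A * B + (A * p + B * q + p * q) - 2 * ((A + q) * p) := by ring
  rw [← Int.odd_mul, ← Int.odd_mul, hmod, Int.odd_sub, Int.odd_add]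
  simp only [even_two_mul, iff_true, Int.not_even_iff_odd.2 h, iff_false]

variable {p' q' δ : ℤ}

/-- The inequalities say that the solution `(k * q - m * q', m * p' - (k - 1) * p)` of
`A * p + B * q = p * q + m`, where `m = 2 * ρ + 1`, lies in `(0, q] × (0, p]`. -/
lemma add_mem_Spq_iff_odd_and_odd (hδ : 2 * δ = (p - 1) * (q - 1)) (hdet : q * p' - p * q' = 1)
    {k ρ : ℤ} (hq_le : (k - 1) * q ≤ (2 * ρ + 1) * q') (hq_lt : (2 * ρ + 1) * q' < k * q)
    (hp_lt : (k - 1) * p < (2 * ρ + 1) * p') (hp_le : (2 * ρ + 1) * p' ≤ k * p) :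
    δ + ρ ∈ Spq p q ↔ Odd (k * q - q') ∧ Odd (p' - (k - 1) * p) := by
  rw [mem_Spq_iff_even_and_even ⟨-q', p', by linarith⟩ (s := k * q - (2 * ρ + 1) * q' - 1)
    (r := (2 * ρ + 1) * p' - (k - 1) * p - 1) (by linarith) (by linarith) (by linarith)
    (by linarith) (by linear_combination hδ - (2 * ρ + 1) * hdet)]
  have hρ : Odd (2 * ρ + 1) := odd_two_mul_add_one ρ
  simp only [Int.even_sub_one, Int.not_even_iff_odd, Int.odd_sub, Int.even_mul, Int.odd_mul,
    Int.not_even_iff_odd.2 hρ, hρ, false_or, true_and]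

lemma mul_lt_of_det_eq_one {N : ℤ} (hp' : 0 ≤ p') (hq' : 0 ≤ q') (hdet : q * p' - p * q' = 1)
    (h : N * p' ≤ p) : N * q' < q := by
  refine lt_of_mul_lt_mul_right ?_ hp'
  calc N * q' * p' = N * p' * q' := by ring
    _ ≤ p * q' := by gcongr
    _ < q * p' := by linarith

lemma lt_mul_of_det_eq_one {N : ℤ} (hp' : 0 ≤ p') (hq' : 0 ≤ q') (hdet : q * p' - p * q' = 1)
    (h : q ≤ N * q') : p < N * p' := by
  refine lt_of_mul_lt_mul_right ?_ hq'
  calc p * q' < q * p' := by linarith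
    _ ≤ N * q' * p' := by gcongr
    _ = N * p' * q' := by ring

theorem isGreatest_constantRunLengths_add_mem_Spq {N : ℤ} (hp : 0 < p) (hq : 0 < q) (hN : 2 ≤ N)
    (hdet : q * p' - p * q' = 1) (hNp : N * p' ≤ p) (hqN : q ≤ (N + 1) * q') :
    IsGreatest (constantRunLengths fun ρ ↦ (p - 1) * (q - 1) / 2 + ρ ∈ Spq p q)
      ((N - 1) / 2 + 1) := by
  have hδ : 2 * ((p - 1) * (q - 1) / 2) = (p - 1) * (q - 1) :=
    Int.two_mul_ediv_two_of_even
      (even_sub_one_mul_sub_one_of_isCoprime ⟨-q', p', by linarith⟩)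
  have hq' : 0 < q' := pos_of_mul_pos_right (hq.trans_le hqN) (by lia)
  have hqp' : 0 < q * p' := by linarith [mul_pos hp hq']
  have hp' : 0 < p' := pos_of_mul_pos_right hqp' hq.le
  have hNq : N * q' < q := mul_lt_of_det_eq_one hp'.le hq'.le hdet hNp
  have hpN : p < (N + 1) * p' := lt_mul_of_det_eq_one hp'.le hq'.le hdet hqN
  refine isGreatest_constantRunLengths (c := Odd (q - q') ∧ Odd p') (by lia)
    (fun ρ hρ hρN ↦ ?_) ?_
  · have hmN : 2 * ρ + 1 ≤ N := by lia
    have hmq : (2 * ρ + 1) * q' ≤ N * q' := by gcongr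
    have hmp : (2 * ρ + 1) * p' ≤ N * p' := by gcongr
    have hmq_nonneg : 0 ≤ (2 * ρ + 1) * q' := by positivity
    have hmp_pos : 0 < (2 * ρ + 1) * p' := by positivity
    simpa using add_mem_Spq_iff_odd_and_odd (k := 1) hδ hdet (by linarith) (by linarith)
      (by linarith) (by linarith)
  · set ρ := (N - 1) / 2 + 1
    have hNm : N + 1 ≤ 2 * ρ + 1 := by lia
    have hmN : 2 * ρ + 1 ≤ 2 * N := by lia
    have hqm : (N + 1) * q' ≤ (2 * ρ + 1) * q' := by gcongr
    have hpm : (N + 1) * p' ≤ (2 * ρ + 1) * p' := by gcongr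
    have hmq : (2 * ρ + 1) * q' ≤ 2 * N * q' := by gcongr
    have hmp : (2 * ρ + 1) * p' ≤ 2 * N * p' := by gcongr
    have hodd : Odd ((q - q') * p + p' * q + p * q) := ⟨p * q, by linear_combination hdet⟩
    rw [← odd_add_and_odd_sub_iff_not hodd, add_mem_Spq_iff_odd_and_odd (k := 2) hδ hdet
      (by linarith) (by linarith) (by linarith) (by linarith)]
    ring_nf

end Semigroup

/-- Euler's continuant of the `n` entries `a 0, …, a (n - 1)`. The numerator of `[a 0, …, a n]` is
the continuant of `a 0, …, a n`, its denominator that of `a 1, …, a n`. -/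
def continuant (a : ℕ → ℤ) : ℕ → ℤ
  | 0 => 1
  | 1 => a 0
  | n + 2 => a (n + 1) * continuant a (n + 1) + continuant a n

section Continuant

variable {a : ℕ → ℤ} {n : ℕ}

lemma continuant_add_two (a : ℕ → ℤ) (n : ℕ) :
    continuant a (n + 2) = a (n + 1) * continuant a (n + 1) + continuant a n :=
  rfl

lemma continuant_add_two_left (a : ℕ → ℤ) (n : ℕ) :
    continuant a (n + 2) = a 0 * continuant (fun i ↦ a (i + 1)) (n + 1) +
      continuant (fun i ↦ a (i + 1 + 1)) n := by
  induction n using Nat.twoStepInduction with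
  | zero => simp only [continuant]; ring
  | one => simp only [continuant]; ring
  | more n ih₀ ih₁ =>
    rw [continuant_add_two a, ih₀, ih₁, continuant_add_two (fun i ↦ a (i + 1)) (n + 1),
      continuant_add_two (fun i ↦ a (i + 1 + 1)) n]
    ring

lemma continuant_mul_sub_continuant_mul (a : ℕ → ℤ) (n : ℕ) :
    continuant a (n + 2) * continuant (fun i ↦ a (i + 1)) n -
      continuant (fun i ↦ a (i + 1)) (n + 1) * continuant a (n + 1) = (-1) ^ n := by
  induction n with
  | zero => simp only [continuant]; ring
  | succ n ih =>
    rw [pow_succ, ← ih, continuant_add_two a (n + 1), continuant_add_two (fun i ↦ a (i + 1)) n]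
    ring

lemma isCoprime_continuant (a : ℕ → ℤ) (n : ℕ) :
    IsCoprime (continuant a (n + 1)) (continuant (fun i ↦ a (i + 1)) n) := by
  induction n generalizing a with
  | zero => exact isCoprime_one_right
  | succ n ih =>
    rw [continuant_add_two_left, add_comm]
    exact (ih fun i ↦ a (i + 1)).symm.add_mul_right_left (a 0)

lemma continuant_pos (h : ∀ i < n, 0 < a i) : 0 < continuant a n := by
  induction n using Nat.twoStepInduction with
  | zero => exact one_pos
  | one => exact h 0 one_pos
  | more n ih₀ ih₁ =>
    have hlast := h (n + 1) (by lia)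
    have hpos₀ := ih₀ fun i hi ↦ h i (by lia)
    have hpos₁ := ih₁ fun i hi ↦ h i (by lia)
    rw [continuant_add_two]
    positivity

lemma mul_continuant_le_continuant_succ (h : ∀ i < n, 0 < a i) :
    a n * continuant a n ≤ continuant a (n + 1) := by
  cases n with
  | zero => simp [continuant]
  | succ n =>
    rw [continuant_add_two]
    linarith [continuant_pos (n := n) fun i hi ↦ h i (by lia)]

lemma continuant_le_continuant_succ (h : ∀ i ≤ n, 0 < a i) :
    continuant a n ≤ continuant a (n + 1) := by
  have hpos : 0 < continuant a n := continuant_pos fun i hi ↦ h i hi.le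
  have hone : 1 ≤ a n := h n le_rfl
  calc continuant a n ≤ a n * continuant a n := le_mul_of_one_le_left hpos.le hone
    _ ≤ continuant a (n + 1) := mul_continuant_le_continuant_succ fun i hi ↦ h i hi.le

lemma continuant_succ_le_add_one_mul (h : ∀ i < n, 0 < a i) :
    continuant a (n + 1) ≤ (a n + 1) * continuant a n := by
  cases n with
  | zero => simp [continuant]
  | succ n =>
    rw [continuant_add_two]
    linarith [continuant_le_continuant_succ fun i hi ↦ h i (Nat.lt_succ_of_le hi)]

lemma continuant_tail_le (h : ∀ i ≤ n, 0 < a i) :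
    continuant (fun i ↦ a (i + 1)) n ≤ continuant a (n + 1) := by
  cases n with
  | zero => exact h 0 le_rfl
  | succ n =>
    have hhead : 1 ≤ a 0 := h 0 (by lia)
    have htail : 0 < continuant (fun i ↦ a (i + 1)) (n + 1) :=
      continuant_pos fun i hi ↦ h (i + 1) (by lia)
    have htail₂ : 0 < continuant (fun i ↦ a (i + 1 + 1)) n :=
      continuant_pos fun i hi ↦ h (i + 1 + 1) (by lia)
    rw [continuant_add_two_left]
    linarith [le_mul_of_one_le_left htail.le hhead]

lemma cfVal_eq_continuant_div (h : ∀ i < n, 0 < a (i + 1)) :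
    cfVal a n = (continuant a (n + 1) : ℚ) / continuant (fun i ↦ a (i + 1)) n := by
  induction n generalizing a with
  | zero => simp [cfVal, continuant]
  | succ n ih =>
    have hden : (continuant (fun i ↦ a (i + 1)) (n + 1) : ℚ) ≠ 0 :=
      mod_cast (continuant_pos h).ne'
    rw [cfVal, ih fun i hi ↦ h (i + 1) (by lia), one_div_div, continuant_add_two_left]
    push_cast
    rw [add_div, mul_div_cancel_right₀ _ hden]

lemma eq_continuant_of_div_eq_cfVal {p q : ℤ} (hp : 0 < p) (hpq : IsCoprime p q)
    (h : ∀ i < n, 0 < a (i + 1)) (hcf : (q : ℚ) / p = cfVal a n) :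
    q = continuant a (n + 1) ∧ p = continuant (fun i ↦ a (i + 1)) n :=
  Rat.div_int_inj hp (continuant_pos h) (Int.isCoprime_iff_gcd_eq_one.1 hpq.symm)
    (Int.isCoprime_iff_gcd_eq_one.1 (isCoprime_continuant a n))
    (hcf.trans (cfVal_eq_continuant_div h))

lemma head_pos_of_continuant_tail_lt (h : ∀ i ≤ n, 0 < a (i + 1))
    (hlt : continuant (fun i ↦ a (i + 1)) (n + 1) < continuant a (n + 2)) : 0 < a 0 := by
  have htail : 0 < continuant (fun i ↦ a (i + 1)) (n + 1) :=
    continuant_pos fun i hi ↦ h i (by lia)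
  have htail_le : continuant (fun i ↦ a (i + 1 + 1)) n ≤ continuant (fun i ↦ a (i + 1)) (n + 1) :=
    continuant_tail_le h
  rw [continuant_add_two_left] at hlt
  exact pos_of_mul_pos_left (by linarith) htail.le

end Continuant

theorem stmt1 (p q : ℤ) (hp : 1 < p) (hq : 1 < q) (hpq : Int.gcd p q = 1)
    (hqp : p < q)
    (n : ℕ) (a : ℕ → ℤ)
    (hcf : (q : ℚ) / (p : ℚ) = cfVal a n)
    (hpos : ∀ i : ℕ, 1 ≤ i → i ≤ n → 0 < a i)
    (hlast : 2 ≤ a n) :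
    IsGreatest {w : ℤ | 1 ≤ w ∧
        ((∀ ρ : ℤ, 0 ≤ ρ → ρ < w → (p - 1) * (q - 1) / 2 + ρ ∈ Spq p q) ∨
         (∀ ρ : ℤ, 0 ≤ ρ → ρ < w → (p - 1) * (q - 1) / 2 + ρ ∉ Spq p q))}
      ((a n - 1) / 2 + 1) := by
  have hentries : ∀ i < n, 0 < a (i + 1) := fun i hi ↦ hpos (i + 1) (by lia) hi
  obtain ⟨hq_eq, hp_eq⟩ := eq_continuant_of_div_eq_cfVal (by lia)
    (Int.isCoprime_iff_gcd_eq_one.2 hpq) hentries hcf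
  obtain _ | n := n
  · have hp_one : p = 1 := hp_eq
    lia
  have hhead : 0 < a 0 := head_pos_of_continuant_tail_lt
    (fun i hi ↦ hentries i (Nat.lt_succ_of_le hi)) (hp_eq ▸ hq_eq ▸ hqp)
  have hall : ∀ i < n + 1, 0 < a i := fun i hi ↦
    i.eq_zero_or_pos.elim (· ▸ hhead) (hpos i · hi.le)
  have htail : ∀ i < n, 0 < a (i + 1) := fun i hi ↦ hentries i (by lia)
  have hdet := continuant_mul_sub_continuant_mul a n
  rw [← hq_eq, ← hp_eq] at hdet
  rcases neg_one_pow_eq_or ℤ n with hsign | hsign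
  · exact isGreatest_constantRunLengths_add_mem_Spq (by lia) (by lia) hlast (hdet.trans hsign)
      (hp_eq ▸ mul_continuant_le_continuant_succ htail)
      (hq_eq ▸ continuant_succ_le_add_one_mul hall)
  · rw [Spq_comm, mul_comm (p - 1)]
    exact isGreatest_constantRunLengths_add_mem_Spq (by lia) (by lia) hlast (by linarith)
      (hq_eq ▸ mul_continuant_le_continuant_succ hall)
      (hp_eq ▸ continuant_succ_le_add_one_mul htail)
end

section
/- Let p, q > 1 be coprime integers and suppose r̄ is even (hence p is odd). Then K(p,q) equals the greatest nonnegative integer σ such that for all integers ρ with 0 ≤ ρ ≤ σ one has r′_ρ ≥ ⌈p/2⌉. -/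
/-!
Let `a` be an inverse of `q` modulo `p`. The class of `n` modulo `p` meets the semigroup first at
`w * q`, where `w = n * a % p`, so `n ∈ Spq p q` iff `w * q ≤ n`. When `(p - 1) * (q - 1) ≤ 2 * n`
and `2 * n < p * q`, the number `n` is so close to `p * q / 2` that this reduces to `2 * w < p`.

For `n = δ + ρ` the residue `w` is `r'_ρ`, because `2δ = (p - 1) * (q - 1)` and `2` is invertible
modulo `p`. Hence `δ + ρ ∉ Spq p q` iff `r'_ρ ≥ ⌈p / 2⌉`, for all `ρ` from `0` to `(p - 1) / 2`.
Both conditions hold at `ρ = 0` and both fail at `ρ = (p - 1) / 2`, where `δ + ρ = (p - 1) / 2 * q`,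
so the runs counted by `K(p,q)` and by the residues end inside this range and agree.
-/

/-- The number `δ`: the semigroup generated by coprime `p` and `q` has conductor `2δ`. The division
is exact for such `p` and `q`. -/
def halfConductor (p q : ℤ) : ℤ := (p - 1) * (q - 1) / 2

/-- The residue `r'_ρ`, a closed form for the solution `w` of `w * q ≡ δ + ρ` modulo `p`. Here `a`
stands for the inverse `r̄` of `q`, and the division is exact when `p + a` is odd. -/
def shiftedResidue (p a ρ : ℤ) : ℤ := ((p + a - 1) / 2 + ρ * a) % p

theorem forall_le_iff_forall_le_of_not {α : Type*} [LinearOrder α] {P Q : α → Prop} {b m s : α}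
    (hbm : b ≤ m) (hPQ : ∀ x, b ≤ x → x ≤ m → (P x ↔ Q x)) (hPm : ¬P m) :
    (∀ x, b ≤ x → x ≤ s → P x) ↔ ∀ x, b ≤ x → x ≤ s → Q x := by
  have hQm : ¬Q m := mt (hPQ m hbm le_rfl).mpr hPm
  rcases lt_or_ge s m with hsm | hms
  · exact forall₃_congr fun x hbx hxs => hPQ x hbx (hxs.trans hsm.le)
  · exact iff_of_false (fun h => hPm (h m hbm hms)) (fun h => hQm (h m hbm hms))

section Semigroup

variable {p q a n : ℤ}

theorem mul_emod_mul_modEq (hqa : q * a ≡ 1 [ZMOD p]) : n * a % p * q ≡ n [ZMOD p] :=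
  calc n * a % p * q ≡ n * a * q [ZMOD p] := (Int.mod_modEq _ _).mul_right q
    _ = n * (q * a) := by ring
    _ ≡ n * 1 [ZMOD p] := hqa.mul_left n
    _ = n := mul_one n

theorem mul_add_mul_mul_modEq (t v : ℤ) (hqa : q * a ≡ 1 [ZMOD p]) :
    (t * p + v * q) * a ≡ v [ZMOD p] :=
  calc (t * p + v * q) * a = p * (t * a) + v * (q * a) := by ring
    _ ≡ 0 + v * 1 [ZMOD p] :=
      (Int.modEq_zero_iff_dvd.mpr (dvd_mul_right p _)).add (hqa.mul_left v)
    _ = v := by ring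

theorem mem_Spq_iff_emod_mul_le (hp : 0 < p) (hq : 0 ≤ q) (hqa : q * a ≡ 1 [ZMOD p]) :
    n ∈ Spq p q ↔ n * a % p * q ≤ n := by
  constructor
  · rintro ⟨t, v, ht, hv, rfl⟩
    have hmod_le : v % p ≤ v :=
      Int.emod_def v p ▸ sub_le_self v (mul_nonneg hp.le (Int.ediv_nonneg hv hp.le))
    calc (t * p + v * q) * a % p * q = v % p * q := by rw [(mul_add_mul_mul_modEq t v hqa).eq]
      _ ≤ v * q := mul_le_mul_of_nonneg_right hmod_le hq
      _ ≤ t * p + v * q := le_add_of_nonneg_left (mul_nonneg ht hp.le)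
  · intro hle
    obtain ⟨t, ht⟩ := (mul_emod_mul_modEq hqa).dvd
    have ht0 : 0 ≤ t := nonneg_of_mul_nonneg_right (ht ▸ sub_nonneg.mpr hle) hp
    exact ⟨t, n * a % p, ht0, Int.emod_nonneg _ hp.ne', by linear_combination ht⟩

theorem mem_Spq_iff_two_mul_emod_lt (hp : 0 < p) (hq : 0 < q) (hqa : q * a ≡ 1 [ZMOD p])
    (hlow : (p - 1) * (q - 1) ≤ 2 * n) (hhigh : 2 * n < p * q) :
    n ∈ Spq p q ↔ 2 * (n * a % p) < p := by
  rw [mem_Spq_iff_emod_mul_le hp hq.le hqa]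
  refine ⟨fun hle => lt_of_mul_lt_mul_right (by linarith) hq.le, fun hlt => ?_⟩
  -- `n * a % p * q - n` is a multiple of `p`, so it is nonpositive as soon as it is less than `p`.
  obtain ⟨t, ht⟩ := (mul_emod_mul_modEq (n := n) hqa).dvd
  have hgap : 2 * (n * a % p * q - n) < 2 * p := by
    linarith [mul_le_mul_of_nonneg_right (Int.le_sub_one_of_lt hlt) hq.le]
  have ht0 : -1 < t := lt_of_mul_lt_mul_left (by linarith) hp.le
  exact sub_nonneg.mp (ht ▸ mul_nonneg hp.le (Int.add_one_le_of_lt ht0))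

theorem mem_KSet_iff_of_halfConductor_notMem {s : ℤ} (hδ : halfConductor p q ∉ Spq p q) :
    s ∈ KSet p q ↔ 0 ≤ s ∧ ∀ ρ, 0 ≤ ρ → ρ ≤ s → halfConductor p q + ρ ∉ Spq p q :=
  and_congr_right fun _ => forall₃_congr fun _ _ _ => iff_false_right hδ

end Semigroup

section EvenInverse

variable {p q a ρ : ℤ}

theorem odd_of_mul_modEq_one_of_even (hqa : q * a ≡ 1 [ZMOD p]) (ha : Even a) : Odd p := by
  obtain ⟨j, hj⟩ := hqa.dvd
  have hodd : Odd (p * j) := hj ▸ odd_one.sub_even (ha.mul_left q)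
  exact (Int.odd_mul.mp hodd).1

theorem two_mul_halfConductor (hp : Odd p) : 2 * halfConductor p q = (p - 1) * (q - 1) :=
  Int.two_mul_ediv_two_of_even ((hp.sub_odd odd_one).mul_right _)

theorem halfConductor_add_half (hp : Odd p) :
    halfConductor p q + (p - 1) / 2 = (p - 1) / 2 * q := by
  have hδ : 2 * halfConductor p q = (p - 1) * (q - 1) := two_mul_halfConductor hp
  have hhalf : 2 * ((p - 1) / 2) = p - 1 := Int.two_mul_ediv_two_of_even (hp.sub_odd odd_one)
  refine mul_left_cancel₀ two_ne_zero ?_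
  linear_combination hδ + (1 - q) * hhalf

theorem halfConductor_add_half_mem_Spq (hp : Odd p) (hp0 : 0 < p) :
    halfConductor p q + (p - 1) / 2 ∈ Spq p q :=
  ⟨0, (p - 1) / 2, le_rfl, by omega, by rw [halfConductor_add_half hp, zero_mul, zero_add]⟩

theorem halfConductor_add_mul_emod (hp : Odd p) (ha : Even a) (hqa : q * a ≡ 1 [ZMOD p]) :
    (halfConductor p q + ρ) * a % p = shiftedResidue p a ρ := by
  have hδ : 2 * halfConductor p q = (p - 1) * (q - 1) := two_mul_halfConductor hp
  have hstart : 2 * ((p + a - 1) / 2) = p + a - 1 :=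
    Int.two_mul_ediv_two_of_even ((hp.add_even ha).sub_odd odd_one)
  obtain ⟨j, hj⟩ := hqa.dvd
  have hdvd : p ∣ 2 * ((p + a - 1) / 2 + ρ * a - (halfConductor p q + ρ) * a) :=
    ⟨1 - j - a * (q - 1), by linear_combination hstart - a * hδ - hj⟩
  exact (Int.modEq_of_dvd ((Int.isCoprime_two_right.mpr hp).dvd_of_dvd_mul_left hdvd)).eq

theorem halfConductor_add_mem_Spq_iff (hp : Odd p) (hp0 : 0 < p) (hq : 0 < q) (ha : Even a)
    (hqa : q * a ≡ 1 [ZMOD p]) (hρ : 0 ≤ ρ) (hρp : ρ ≤ (p - 1) / 2) :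
    halfConductor p q + ρ ∈ Spq p q ↔ shiftedResidue p a ρ < (p + 1) / 2 := by
  have hδ : 2 * halfConductor p q = (p - 1) * (q - 1) := two_mul_halfConductor hp
  have hρp' : 2 * ρ ≤ p - 1 := by omega
  rw [mem_Spq_iff_two_mul_emod_lt hp0 hq hqa (by linarith) (by linarith),
    halfConductor_add_mul_emod hp ha hqa]
  omega

theorem half_le_shiftedResidue_zero (ha0 : 0 < a) (hap : a < p) (ha : Even a) :
    (p + 1) / 2 ≤ shiftedResidue p a 0 := by
  obtain ⟨c, rfl⟩ := ha
  rw [shiftedResidue, zero_mul, add_zero, Int.emod_eq_of_lt (by omega) (by omega)]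
  omega

theorem halfConductor_notMem_Spq (hq : 0 < q) (ha0 : 0 < a) (hap : a < p) (ha : Even a)
    (hqa : q * a ≡ 1 [ZMOD p]) : halfConductor p q ∉ Spq p q := by
  have hp : Odd p := odd_of_mul_modEq_one_of_even hqa ha
  rw [← add_zero (halfConductor p q),
    halfConductor_add_mem_Spq_iff hp (ha0.trans hap) hq ha hqa le_rfl (by omega), not_lt]
  exact half_le_shiftedResidue_zero ha0 hap ha

theorem KSet_eq_setOf_half_le_shiftedResidue (hq : 0 < q) (ha0 : 0 < a) (hap : a < p)
    (ha : Even a) (hqa : q * a ≡ 1 [ZMOD p]) :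
    KSet p q = {s | 0 ≤ s ∧ ∀ ρ, 0 ≤ ρ → ρ ≤ s → (p + 1) / 2 ≤ shiftedResidue p a ρ} := by
  have hp : Odd p := odd_of_mul_modEq_one_of_even hqa ha
  have hp0 : 0 < p := ha0.trans hap
  ext s
  rw [mem_KSet_iff_of_halfConductor_notMem (halfConductor_notMem_Spq hq ha0 hap ha hqa)]
  refine and_congr_right fun _ => forall_le_iff_forall_le_of_not (m := (p - 1) / 2) (by omega)
    (fun ρ hρ hρp => ?_) (not_not_intro (halfConductor_add_half_mem_Spq hp hp0))
  rw [halfConductor_add_mem_Spq_iff hp hp0 hq ha hqa hρ hρp, not_lt]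

end EvenInverse

theorem stmt6 (p q k r rb : ℤ) (hp : 1 < p) (hq : 1 < q)
    (hpq : Int.gcd p q = 1)
    (hqkr : q = k * p + r) (hr0 : 0 < r) (hrp : r < p)
    (hrb0 : 0 < rb) (hrbp : rb < p) (hrrb : r * rb ≡ 1 [ZMOD p])
    (heven : Even rb) :
    ∀ σ : ℤ, IsGreatest {σ' : ℤ | 0 ≤ σ' ∧ ∀ ρ : ℤ, 0 ≤ ρ → ρ ≤ σ' →
        (p + 1) / 2 ≤ ((p + rb - 1) / 2 + ρ * rb) % p} σ ↔
      IsGreatest (KSet p q) σ := by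
  have hqrb : q * rb ≡ 1 [ZMOD p] :=
    calc q * rb = k * p * rb + r * rb := by rw [hqkr, add_mul]
      _ ≡ 0 + 1 [ZMOD p] := (Int.modEq_zero_iff_dvd.mpr ⟨k * rb, by ring⟩).add hrrb
      _ = 1 := zero_add 1
  intro σ
  rw [KSet_eq_setOf_half_le_shiftedResidue (zero_lt_one.trans hq) hrb0 hrbp heven hqrb]
  rfl
end

section
/- Let p, q > 1 be coprime integers with q > p + 1. Then K(p,q) = K(p, q − p). -/
/-!
Put `r = 2ρ + 1`. Since `2δ = (p - 1)(q - 1)`, writing `δ + ρ = tp + uq` with `0 ≤ u < p` amounts to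
writing `r = xp + yq` with `x = 2t + 1` and `y = 2u + 1 - p`; membership in `S(p, q)` is the
condition `x > 0`. If `y ≤ 0`, then `x > 0` because `r > 0`. Conversely, `x > 0` and `y > 0` force
`r ≥ p + cq`, where `c` is the least positive value that the parity of `y` allows: `1` if `p` is
even and `2` if `p` is odd. So for `r < p + cq` membership only depends on the sign of `y`.

Passing from `q + p` to `q` keeps `y` if `p` is odd, and shifts it by `p`, which reverses its sign,
if `p` is even. Membership is thus preserved for odd `p` and negated for even `p` as long as
`r < p + cq`. Both members and non-members of `S(p, q)` occur in that range, so the first change of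
membership happens there, at the same place for `q + p` and for `q`.
-/

open Set

section ConstancyRun

variable {α : Type*} [LinearOrder α] {M M' : Set α} {a b s : α}

/-- The right endpoints `s` of the intervals `[a, s]` on which membership in `M` is constant.
It is used with `a = 0`, where it describes `KSet`. -/
def constancyRun (M : Set α) (a : α) : Set α :=
  {s | a ≤ s ∧ ∀ x, a ≤ x → x ≤ s → (x ∈ M ↔ a ∈ M)}

lemma constancyRun_compl (M : Set α) (a : α) : constancyRun Mᶜ a = constancyRun M a := by
  simp only [constancyRun, mem_compl_iff, not_iff_not]

lemma lt_of_mem_constancyRun (hs : s ∈ constancyRun M a) (hmem : (Ico a b ∩ M).Nonempty)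
    (hnot : (Ico a b \ M).Nonempty) : s < b := by
  obtain ⟨x, hx, hxM⟩ := hmem
  obtain ⟨y, hy, hyM⟩ := hnot
  by_contra! hbs
  have hxa : x ∈ M ↔ a ∈ M := hs.2 x hx.1 (hx.2.le.trans hbs)
  have hya : y ∈ M ↔ a ∈ M := hs.2 y hy.1 (hy.2.le.trans hbs)
  exact hyM (hya.2 (hxa.1 hxM))

lemma constancyRun_subset_of_forall_mem_iff (h : ∀ x ∈ Ico a b, (x ∈ M ↔ x ∈ M'))
    (hmem : (Ico a b ∩ M).Nonempty) (hnot : (Ico a b \ M).Nonempty) :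
    constancyRun M a ⊆ constancyRun M' a := by
  intro s hs
  have hsb : s < b := lt_of_mem_constancyRun hs hmem hnot
  refine ⟨hs.1, fun x hax hxs => ?_⟩
  rw [← h x ⟨hax, hxs.trans_lt hsb⟩, ← h a ⟨le_rfl, hs.1.trans_lt hsb⟩]
  exact hs.2 x hax hxs

lemma constancyRun_congr (h : ∀ x ∈ Ico a b, (x ∈ M ↔ x ∈ M'))
    (hmem : (Ico a b ∩ M).Nonempty) (hnot : (Ico a b \ M).Nonempty) :
    constancyRun M a = constancyRun M' a :=
  (constancyRun_subset_of_forall_mem_iff h hmem hnot).antisymm <|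
    constancyRun_subset_of_forall_mem_iff (fun x hx => (h x hx).symm)
      (hmem.mono fun x hx => ⟨hx.1, (h x hx.1).1 hx.2⟩)
      (hnot.mono fun x hx => ⟨hx.1, mt (h x hx.1).2 hx.2⟩)

end ConstancyRun

/-- The semigroup `S(p, q)` translated by `-δ`, so that `ρ` stands for the integer `δ + ρ`.
The set `KSet p q` describes the run of constant membership in it that starts at `0`. -/
def centredSpq (p q : ℤ) : Set ℤ :=
  {ρ | (p - 1) * (q - 1) / 2 + ρ ∈ Spq p q}

lemma KSet_eq_constancyRun (p q : ℤ) : KSet p q = constancyRun (centredSpq p q) 0 := by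
  simp only [KSet, constancyRun, centredSpq, mem_ofPred_eq, add_zero]

/-- The pair `(x, y)` gives centred coordinates of `ρ`: writing `x = 2t + 1` and `y = 2u + 1 - p`,
it encodes the unique representation `δ + ρ = tp + uq` with `0 ≤ u < p`. Membership of `δ + ρ` in
`S(p, q)` is read off the sign of `x`, and for small `ρ` off the sign of `y`. -/
structure IsCentredRep (p q ρ x y : ℤ) : Prop where
  odd_left : Odd x
  odd_right_add : Odd (y + p)
  neg_lt : -p < y
  lt : y < p
  eq : 2 * ρ + 1 = x * p + y * q

/-- The number of `ρ ≥ 0` with `2ρ + 1 < p + cq`, where `c = 1 + p % 2` is the least positive `y`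
such that `y + p` is odd. In this range the sign of the coordinate `y` of `ρ` decides whether
`δ + ρ` lies in `S(p, q)`. -/
def signHorizon (p q : ℤ) : ℤ :=
  (p + (1 + p % 2) * q) / 2

section Coprime

variable {p q ρ x y : ℤ}

lemma odd_of_isCoprime_of_even (h : IsCoprime p q) (hp : Even p) : Odd q := by
  obtain ⟨a, b, hab⟩ := h
  have hodd : Odd (a * p + b * q) := hab ▸ odd_one
  exact (Int.odd_mul.1 ((Int.odd_add'.1 hodd).2 (hp.mul_left a))).2

lemma two_mul_sub_one_mul_sub_one_ediv_two (h : IsCoprime p q) :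
    2 * ((p - 1) * (q - 1) / 2) = (p - 1) * (q - 1) := by
  refine Int.two_mul_ediv_two_of_even (Int.even_mul.2 ?_)
  rcases Int.even_or_odd p with hp | hp
  · exact Or.inr ((odd_of_isCoprime_of_even h hp).sub_odd odd_one)
  · exact Or.inl (hp.sub_odd odd_one)

lemma exists_isCentredRep (hp : 0 < p) (h : IsCoprime p q) (ρ : ℤ) :
    ∃ x y, IsCentredRep p q ρ x y := by
  have hδ := two_mul_sub_one_mul_sub_one_ediv_two h
  obtain ⟨a, b, hab⟩ := h
  set n := (p - 1) * (q - 1) / 2 + ρ with hn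
  have hdiv : n * b % p + p * (n * b / p) = n * b := Int.emod_add_mul_ediv _ _
  have hu_nonneg : 0 ≤ n * b % p := Int.emod_nonneg _ hp.ne'
  have hu_lt : n * b % p < p := Int.emod_lt_of_pos _ hp
  refine ⟨2 * (n * a + n * b / p * q) + 1, 2 * (n * b % p) + 1 - p, odd_two_mul_add_one _,
    ⟨n * b % p, by ring⟩, by omega, by omega, ?_⟩
  linear_combination 2 * hn - hδ - 2 * n * hab - 2 * q * hdiv

namespace IsCentredRep

lemma mem_centredSpq_iff_pos (hq : 0 < q) (h : IsCoprime p q) (hr : IsCentredRep p q ρ x y) :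
    ρ ∈ centredSpq p q ↔ 0 < x := by
  obtain ⟨⟨t, rfl⟩, ⟨u, hu⟩, hneg_lt, hlt, heq⟩ := hr
  obtain rfl : y = 2 * u + 1 - p := by linarith
  have hδ := two_mul_sub_one_mul_sub_one_ediv_two h
  have hn : (p - 1) * (q - 1) / 2 + ρ = t * p + u * q := by linarith
  rw [centredSpq, mem_ofPred_eq, hn]
  constructor
  · rintro ⟨a, b, ha, hb, hab⟩
    have hdvd : p ∣ u - b := h.dvd_of_dvd_mul_right ⟨a - t, by linarith⟩
    have hub : u - b ≤ 0 := by
      by_contra! hpos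
      have := Int.le_of_dvd hpos hdvd
      omega
    have hat : (a - t) * p ≤ 0 := by
      linarith [mul_nonpos_of_nonpos_of_nonneg hub hq.le]
    have := nonpos_of_mul_nonpos_left hat (by omega)
    omega
  · intro ht
    exact ⟨t, u, by omega, by omega, rfl⟩

lemma mem_centredSpq_iff_nonpos (hq : 0 < q) (h : IsCoprime p q) (hr : IsCentredRep p q ρ x y)
    (hρ : ρ ∈ Ico 0 (signHorizon p q)) : ρ ∈ centredSpq p q ↔ y ≤ 0 := by
  rw [hr.mem_centredSpq_iff_pos hq h]
  obtain ⟨-, hodd, hneg_lt, hlt, heq⟩ := hr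
  obtain ⟨hρ0, hρN⟩ := hρ
  constructor
  · intro hx
    by_contra! hy
    have hpx : p ≤ x * p := le_mul_of_one_le_left (by omega) hx
    have hyc : 1 + p % 2 ≤ y := by
      obtain ⟨k, hk⟩ := hodd
      omega
    have hqy : (1 + p % 2) * q ≤ y * q := mul_le_mul_of_nonneg_right hyc hq.le
    unfold signHorizon at hρN
    omega
  · intro hy
    have hyq : y * q ≤ 0 := mul_nonpos_of_nonpos_of_nonneg hy hq.le
    exact pos_of_mul_pos_left (by omega : 0 < x * p) (by omega)

lemma of_add_of_odd (hp : Odd p) (hr : IsCentredRep p (q + p) ρ x y) :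
    IsCentredRep p q ρ (x + y) y where
  odd_left := hr.odd_left.add_even ((Int.odd_add'.1 hr.odd_right_add).1 hp)
  odd_right_add := hr.odd_right_add
  neg_lt := hr.neg_lt
  lt := hr.lt
  eq := by linear_combination hr.eq

lemma odd_right (hp : Even p) (hr : IsCentredRep p q ρ x y) : Odd y :=
  (Int.odd_add.1 hr.odd_right_add).2 hp

lemma of_add_of_even_of_pos (hp : Even p) (hq : Odd q) (hr : IsCentredRep p (q + p) ρ x y)
    (hy : 0 < y) : IsCentredRep p q ρ (x + y + q) (y - p) where
  odd_left := (hr.odd_left.add_odd (hr.odd_right hp)).add_odd hq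
  odd_right_add := by simpa using hr.odd_right hp
  neg_lt := by omega
  lt := by linarith [hr.neg_lt, hr.lt]
  eq := by linear_combination hr.eq

lemma of_add_of_even_of_neg (hp : Even p) (hq : Odd q) (hr : IsCentredRep p (q + p) ρ x y)
    (hy : y < 0) : IsCentredRep p q ρ (x + y - q) (y + p) where
  odd_left := (hr.odd_left.add_odd (hr.odd_right hp)).sub_odd hq
  odd_right_add := hr.odd_right_add.add_even hp
  neg_lt := by linarith [hr.neg_lt, hr.lt]
  lt := by omega
  eq := by linear_combination hr.eq

end IsCentredRep

lemma signHorizon_le_signHorizon_add_self (hp : 0 ≤ p) :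
    signHorizon p q ≤ signHorizon p (q + p) := by
  have hc : 0 ≤ 1 + p % 2 := by omega
  have hcq : (1 + p % 2) * q ≤ (1 + p % 2) * (q + p) := by
    gcongr
    omega
  unfold signHorizon
  omega

lemma mem_centredSpq_add_iff_of_odd (hp : 0 < p) (hq : 0 < q) (h : IsCoprime p q) (hodd : Odd p)
    (hρ : ρ ∈ Ico 0 (signHorizon p q)) : ρ ∈ centredSpq p (q + p) ↔ ρ ∈ centredSpq p q := by
  have h' : IsCoprime p (q + p) := by simpa using h.add_mul_left_right 1
  have hρ' := Ico_subset_Ico_right (signHorizon_le_signHorizon_add_self hp.le) hρ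
  obtain ⟨x, y, hr⟩ := exists_isCentredRep hp h' ρ
  rw [hr.mem_centredSpq_iff_nonpos (by omega) h' hρ',
    (hr.of_add_of_odd hodd).mem_centredSpq_iff_nonpos hq h hρ]

lemma mem_centredSpq_add_iff_of_even (hp : 0 < p) (hq : 0 < q) (h : IsCoprime p q) (heven : Even p)
    (hρ : ρ ∈ Ico 0 (signHorizon p q)) : ρ ∈ centredSpq p (q + p) ↔ ρ ∉ centredSpq p q := by
  have h' : IsCoprime p (q + p) := by simpa using h.add_mul_left_right 1
  have hqodd : Odd q := odd_of_isCoprime_of_even h heven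
  have hρ' := Ico_subset_Ico_right (signHorizon_le_signHorizon_add_self hp.le) hρ
  obtain ⟨x, y, hr⟩ := exists_isCentredRep hp h' ρ
  have hy : y ≠ 0 := by
    rintro rfl
    simpa using hr.odd_right heven
  rw [hr.mem_centredSpq_iff_nonpos (by omega) h' hρ']
  rcases hy.lt_or_gt with hneg | hpos
  · have hlt := hr.neg_lt
    rw [(hr.of_add_of_even_of_neg heven hqodd hneg).mem_centredSpq_iff_nonpos hq h hρ]
    omega
  · have hlt := hr.lt
    rw [(hr.of_add_of_even_of_pos heven hqodd hpos).mem_centredSpq_iff_nonpos hq h hρ]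
    omega

lemma nonempty_Ico_inter_centredSpq (hp : 0 < p) (hq : 0 < q) (h : IsCoprime p q) :
    (Ico 0 (signHorizon p q) ∩ centredSpq p q).Nonempty := by
  rcases Int.even_or_odd p with heven | hodd
  · have hqodd : Odd q := odd_of_isCoprime_of_even h heven
    have ⟨l, hl⟩ := hqodd
    have hr : IsCentredRep p q l q (1 - p) :=
      ⟨hqodd, by simp, by omega, by omega, by linear_combination -hl⟩
    refine ⟨l, ⟨by omega, ?_⟩, (hr.mem_centredSpq_iff_pos hq h).2 hq⟩
    rw [signHorizon, Int.even_iff.1 heven]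
    omega
  · have ⟨m, hm⟩ := hodd
    have hr : IsCentredRep p q m 1 0 :=
      ⟨odd_one, by simpa using hodd, by omega, hp, by linear_combination -hm⟩
    refine ⟨m, ⟨by omega, ?_⟩, (hr.mem_centredSpq_iff_pos hq h).2 one_pos⟩
    rw [signHorizon, Int.odd_iff.1 hodd]
    omega

lemma exists_isCentredRep_neg_one (hp : 1 < p) (hq : 1 < q) (h : IsCoprime p q) :
    ∃ ρ ∈ Ico 0 (signHorizon p q), ∃ y, IsCentredRep p q ρ (-1) y := by
  -- Take the least nonnegative `yq - p` with `y` in the parity class of `c`, reducing modulo `2q`.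
  set c := 1 + p % 2 with hc
  set k := (c * q - p) / (2 * q)
  obtain ⟨y, hy⟩ : ∃ y, y = c - 2 * k := ⟨_, rfl⟩
  have hdiv : (c * q - p) % (2 * q) = y * q - p := by
    rw [Int.emod_def, hy]
    ring
  have hr_nonneg : 0 ≤ y * q - p := hdiv ▸ Int.emod_nonneg _ (by omega)
  have hr_lt : y * q - p < 2 * q := hdiv ▸ Int.emod_lt_of_pos _ (by omega)
  have hodd : Odd (y + p) := Int.odd_iff.2 (by omega)
  obtain ⟨ρ, hρ⟩ : Odd (y * q - p) := by
    rcases Int.even_or_odd p with hpe | hpo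
    · have hyo : Odd y := (Int.odd_add.1 hodd).2 hpe
      exact (hyo.mul (odd_of_isCoprime_of_even h hpe)).sub_even hpe
    · have hye : Even y := (Int.odd_add'.1 hodd).1 hpo
      exact (hye.mul_right q).sub_odd hpo
  have hy_pos : 0 < y := pos_of_mul_pos_left (by omega : 0 < y * q) (by omega)
  have hy_lt : y < p := by
    by_contra! hpy
    have hpy' : p + 1 ≤ y := by
      have := Int.odd_iff.1 hodd
      omega
    have hyq : (p + 1) * q ≤ y * q := mul_le_mul_of_nonneg_right hpy' (by omega)
    have hpq : (p - 1) * 2 ≤ (p - 1) * q := mul_le_mul_of_nonneg_left hq (by omega)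
    linarith
  have hr_lt_horizon : y * q - p < p + c * q := by
    rcases le_or_gt y c with hyc | hyc
    · have : y * q ≤ c * q := mul_le_mul_of_nonneg_right hyc (by omega)
      omega
    · have hcy : c * q ≤ (y - 2) * q := mul_le_mul_of_nonneg_right (by omega) (by omega)
      have hqc : q ≤ c * q := le_mul_of_one_le_left (by omega) (by omega)
      linarith
  refine ⟨ρ, ⟨by omega, ?_⟩, y, by decide, hodd, by omega, hy_lt, by linear_combination -hρ⟩
  rw [signHorizon, ← hc]
  omega

lemma nonempty_Ico_diff_centredSpq (hp : 1 < p) (hq : 1 < q) (h : IsCoprime p q) :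
    (Ico 0 (signHorizon p q) \ centredSpq p q).Nonempty := by
  obtain ⟨ρ, hρ, y, hr⟩ := exists_isCentredRep_neg_one hp hq h
  have hnot : ρ ∉ centredSpq p q := by
    rw [hr.mem_centredSpq_iff_pos (by omega) h]
    decide
  exact ⟨ρ, hρ, hnot⟩

theorem KSet_add_self (hp : 1 < p) (hq : 1 < q) (h : IsCoprime p q) :
    KSet p (q + p) = KSet p q := by
  have hp0 : 0 < p := by omega
  have hq0 : 0 < q := by omega
  have hmem := nonempty_Ico_inter_centredSpq hp0 hq0 h
  have hnot := nonempty_Ico_diff_centredSpq hp hq h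
  rw [KSet_eq_constancyRun, KSet_eq_constancyRun, eq_comm]
  rcases Int.even_or_odd p with heven | hodd
  · rw [← constancyRun_compl (centredSpq p (q + p))]
    exact constancyRun_congr (fun ρ hρ =>
      iff_not_comm.1 (mem_centredSpq_add_iff_of_even hp0 hq0 h heven hρ)) hmem hnot
  · exact constancyRun_congr
      (fun ρ hρ => (mem_centredSpq_add_iff_of_odd hp0 hq0 h hodd hρ).symm) hmem hnot

end Coprime

theorem stmt7 (p q : ℤ) (hp : 1 < p) (hq : 1 < q)
    (hpq : Int.gcd p q = 1) (hqp : p + 1 < q) :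
    ∀ s : ℤ, IsGreatest (KSet p q) s ↔ IsGreatest (KSet p (q - p)) s := by
  have h : IsCoprime p (q - p) := by
    simpa [sub_eq_add_neg] using (Int.isCoprime_iff_gcd_eq_one.2 hpq).add_mul_left_right (-1)
  have hK : KSet p q = KSet p (q - p) := by
    simpa using KSet_add_self hp (by omega) h
  simp only [hK, implies_true]
end

section
/- Let p, q > 1 be coprime integers with p odd and r̄ even. Let ρ be an integer with 0 ≤ ρ ≤ (p−1)/2 and r′_ρ ≤ (p−1)/2. Then δ + ρ ∈ S(p,q); indeed there exists an integer t ≥ 0 with δ + ρ = t·p + r′_ρ·q. -/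
/-- The remainder `r′_ρ` modulo `p` attached to an inverse `b` of `q` modulo `p`; it serves as the
coefficient of `q` in `δ + ρ`. The division by `2` is exact when `p + b` is odd. -/
def rPrime (p b ρ : ℤ) : ℤ := ((p + b - 1) / 2 + ρ * b) % p

theorem halfConductor_eq_of_odd {p : ℤ} (hp : Odd p) (q : ℤ) :
    halfConductor p q = (p - 1) / 2 * (q - 1) :=
  Int.mul_ediv_assoc' (q - 1) (hp.sub_odd odd_one).two_dvd

section

variable {p q b : ℤ}

theorem halfConductor_mul_modEq (hp : Odd p) (hb : Even b) (hqb : q * b ≡ 1 [ZMOD p]) :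
    halfConductor p q * b ≡ (p + b - 1) / 2 [ZMOD p] := by
  have hδ := halfConductor_eq_of_odd hp q
  obtain ⟨m, rfl⟩ := hp
  obtain ⟨s, rfl⟩ := hb
  have hm : (2 * m + 1 - 1) / 2 = m := by lia
  have hms : (2 * m + 1 + (s + s) - 1) / 2 = m + s := by lia
  rw [hδ, hm, hms]
  calc m * (q - 1) * (s + s)
      = m * (q * (s + s) - (s + s)) := by ring
    _ ≡ m * (1 - (s + s)) [ZMOD 2 * m + 1] := (hqb.sub_right (s + s)).mul_left m
    _ ≡ m + s [ZMOD 2 * m + 1] := Int.modEq_iff_dvd.mpr ⟨s, by ring⟩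

theorem halfConductor_add_modEq_rPrime_mul (hp : Odd p) (hb : Even b)
    (hqb : q * b ≡ 1 [ZMOD p]) (ρ : ℤ) :
    halfConductor p q + ρ ≡ rPrime p b ρ * q [ZMOD p] := by
  have hr : rPrime p b ρ ≡ (halfConductor p q + ρ) * b [ZMOD p] := by
    rw [add_mul]
    exact (Int.mod_modEq _ _).trans ((halfConductor_mul_modEq hp hb hqb).symm.add_right _)
  calc halfConductor p q + ρ
      = (halfConductor p q + ρ) * 1 := (mul_one _).symm
    _ ≡ (halfConductor p q + ρ) * (q * b) [ZMOD p] := hqb.symm.mul_left _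
    _ = (halfConductor p q + ρ) * b * q := by ring
    _ ≡ rPrime p b ρ * q [ZMOD p] := hr.symm.mul_right q

theorem mul_lt_halfConductor_add {ρ u : ℤ} (hp : Odd p) (hq : 0 ≤ q)
    (hρ : -((p - 1) / 2) ≤ ρ) (hu : u ≤ (p - 1) / 2) :
    u * q < halfConductor p q + ρ + p :=
  calc u * q ≤ (p - 1) / 2 * q := by gcongr
    _ = halfConductor p q + (p - 1) / 2 := by rw [halfConductor_eq_of_odd hp]; ring
    _ < halfConductor p q + ρ + p := by lia

theorem exists_nonneg_eq_mul_add_of_modEq {n a : ℤ} (hp : 0 < p) (h : n ≡ a [ZMOD p])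
    (ha : a < n + p) : ∃ t, 0 ≤ t ∧ n = t * p + a := by
  obtain ⟨t, ht⟩ := h.symm.dvd
  have hpt : p * 0 < p * (t + 1) := by linarith
  exact ⟨t, Int.lt_add_one_iff.mp (lt_of_mul_lt_mul_left hpt hp.le), by linarith⟩

theorem stmt13_general {ρ : ℤ} (hp : 0 < p) (hq : 0 ≤ q) (hpodd : Odd p) (heven : Even b)
    (hqb : q * b ≡ 1 [ZMOD p]) (hρ : -((p - 1) / 2) ≤ ρ) (hrρ : rPrime p b ρ ≤ (p - 1) / 2) :
    halfConductor p q + ρ ∈ Spq p q ∧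
    ∃ t : ℤ, 0 ≤ t ∧ halfConductor p q + ρ = t * p + rPrime p b ρ * q := by
  obtain ⟨t, ht, h⟩ := exists_nonneg_eq_mul_add_of_modEq hp
    (halfConductor_add_modEq_rPrime_mul hpodd heven hqb ρ)
    (mul_lt_halfConductor_add hpodd hq hρ hrρ)
  exact ⟨⟨t, rPrime p b ρ, ht, Int.emod_nonneg _ hp.ne', h⟩, t, ht, h⟩

end

theorem stmt13 (p q k r rb ρ : ℤ) (hp : 1 < p) (hq : 1 < q)
    (hpq : Int.gcd p q = 1) (hpodd : Odd p)
    (hqkr : q = k * p + r) (hr0 : 0 < r) (hrp : r < p)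
    (hrb0 : 0 < rb) (hrbp : rb < p) (hrrb : r * rb ≡ 1 [ZMOD p])
    (heven : Even rb)
    (hρ0 : 0 ≤ ρ) (hρ1 : ρ ≤ (p - 1) / 2)
    (hrρ : ((p + rb - 1) / 2 + ρ * rb) % p ≤ (p - 1) / 2) :
    (p - 1) * (q - 1) / 2 + ρ ∈ Spq p q ∧
    ∃ t : ℤ, 0 ≤ t ∧
      (p - 1) * (q - 1) / 2 + ρ = t * p + (((p + rb - 1) / 2 + ρ * rb) % p) * q := by
  have hqr : q ≡ r [ZMOD p] := by simp [hqkr, Int.ModEq]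
  exact stmt13_general (by lia) (by lia) hpodd heven ((hqr.mul_right rb).trans hrrb) (by lia) hrρ
end
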